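/- arXiv:1804.11052 — 5 statements merged into one kernel-verified Lean document; each statement's English description precedes it below -/
import Mathlib

section
/- Let DES = (R, S, Σ_st, F, F_int) be a fully-typed data exchange setting. If DES is consistent, then DES is key-covered; that is, for every pair of contentious stds σ_1, σ_2 in Σ_st, for every valid instance I of R, and for every valuation ν of the variables x_1 ∪ y_1 ∪ x_2 ∪ y_2 such that all atoms of φ_1 and of φ_2 are mapped by ν to facts of I and ν(x_1) = ν(x_2), it holds that ν^{F_int}(o_1) = ν^{F_int}(o_2). -/
namespace RdfDE

/-- The RDF domain: a countably infinite domain partitioned into IRIs, literals and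
blank nodes, with a distinguished infinite subset of null literals. -/
structure RDFDom (Dom : Type) where
  Iri : Set Dom
  Lit : Set Dom
  Blank : Set Dom
  NullLit : Set Dom
  cover : Iri ∪ Lit ∪ Blank = Set.univ
  disjIL : Disjoint Iri Lit
  disjIB : Disjoint Iri Blank
  disjLB : Disjoint Lit Blank
  nullSub : NullLit ⊆ Lit
  infIri : Iri.Infinite
  infLit : Lit.Infinite
  infBlank : Blank.Infinite
  infNull : NullLit.Infinite

/-- Multiplicities 1, ?, *, +. -/
inductive Mult : Type
  | one | opt | star | plus

/-- A triple constraint `p :: T'^μ`; `target = none` stands for `Lit`. -/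
structure TC (Dom Shape : Type) where
  prop : Dom
  target : Option Shape
  mult : Mult

/-- A ShEx schema over the (finite) type `Shape` of shape names. -/
structure ShEx (Dom Shape : Type) (D : RDFDom Dom) where
  δ : Shape → Set (TC Dom Shape)
  finite : ∀ T, (δ T).Finite
  propIri : ∀ T : Shape, ∀ tc ∈ δ T, tc.prop ∈ D.Iri
  uniqueProp : ∀ T : Shape, ∀ tc1 ∈ δ T, ∀ tc2 ∈ δ T, tc1.prop = tc2.prop → tc1 = tc2

/-- Facts of the target signature `G_T`: a ternary `Triple`, unary `Lit`,
and a unary relation for each shape name. -/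
inductive Fact (Dom Shape : Type) : Type
  | triple (s p o : Dom)
  | lit (n : Dom)
  | shape (T : Shape) (n : Dom)

/-- The unary fact `T(n)` where `T ∈ 𝒯 ∪ {Lit}`. -/
def factOf {Dom Shape : Type} (t : Option Shape) (n : Dom) : Fact Dom Shape :=
  match t with
  | none => .lit n
  | some T => .shape T n

/-- Cardinality constraint imposed by a multiplicity on the set of objects. -/
def multOk {Dom : Type} (μ : Mult) (K : Set Dom) : Prop :=
  match μ with
  | .one => ∃! y, y ∈ K
  | .opt => K.Subsingleton
  | .star => True
  | .plus => K.Nonempty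

/-- `J` satisfies every sentence of `Σ_S`: the sort sentences, and for each
triple constraint the sentences `tc`, `mult≥1` (if μ ∈ {1,+}) and `mult≤1` (if μ ∈ {1,?}). -/
def satSigma {Dom Shape : Type} (D : RDFDom Dom) (S : ShEx Dom Shape D)
    (J : Set (Fact Dom Shape)) : Prop :=
  (∀ (T : Shape) (n : Dom), Fact.shape T n ∈ J → n ∈ D.Iri ∪ D.Blank) ∧
  (∀ n : Dom, Fact.lit n ∈ J → n ∈ D.Lit) ∧
  (∀ T : Shape, ∀ tc ∈ S.δ T,
    (∀ x y : Dom, Fact.shape T x ∈ J → Fact.triple x tc.prop y ∈ J →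
      factOf tc.target y ∈ J) ∧
    ((tc.mult = Mult.one ∨ tc.mult = Mult.plus) →
      ∀ x : Dom, Fact.shape T x ∈ J → ∃ y : Dom, Fact.triple x tc.prop y ∈ J) ∧
    ((tc.mult = Mult.one ∨ tc.mult = Mult.opt) →
      ∀ x y z : Dom, Fact.shape T x ∈ J → Fact.triple x tc.prop y ∈ J →
        Fact.triple x tc.prop z ∈ J → y = z))

/-- Nodes of a graph: values occurring in subject or object position. -/
def nodes {Dom : Type} (G : Set (Dom × Dom × Dom)) : Set Dom :=
  {n | ∃ t ∈ G, t.1 = n ∨ t.2.2 = n}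

/-- `G` is an RDF graph: triples lie in `(Iri ∪ Blank) × Iri × (Iri ∪ Blank ∪ Lit)`. -/
def isRDFGraph {Dom : Type} (D : RDFDom Dom) (G : Set (Dom × Dom × Dom)) : Prop :=
  ∀ t ∈ G, t.1 ∈ D.Iri ∪ D.Blank ∧ t.2.1 ∈ D.Iri ∧ t.2.2 ∈ D.Iri ∪ D.Blank ∪ D.Lit

/-- rdf-to-inst(G, typing). -/
def rdfToInst {Dom Shape : Type} (G : Set (Dom × Dom × Dom))
    (typing : Dom → Set (Option Shape)) : Set (Fact Dom Shape) :=
  {F | (∃ t ∈ G, F = Fact.triple t.1 t.2.1 t.2.2) ∨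
       (∃ n ∈ nodes G, ∃ T ∈ typing n, F = factOf T n)}

/-- The graph component of inst-to-rdf(I). -/
def instGraph {Dom Shape : Type} (I : Set (Fact Dom Shape)) : Set (Dom × Dom × Dom) :=
  {t | Fact.triple t.1 t.2.1 t.2.2 ∈ I}

/-- The typing component of inst-to-rdf(I) (empty off the nodes of the graph). -/
def instTyping {Dom Shape : Type} (I : Set (Fact Dom Shape)) : Dom → Set (Option Shape) :=
  fun n => {T | n ∈ nodes (instGraph I) ∧ factOf T n ∈ I}

/-- `(G, typing)` is correctly typed w.r.t. the schema `S`. -/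
def correctlyTyped {Dom Shape : Type} (D : RDFDom Dom) (S : ShEx Dom Shape D)
    (G : Set (Dom × Dom × Dom)) (typing : Dom → Set (Option Shape)) : Prop :=
  ∀ n ∈ nodes G,
    ((none : Option Shape) ∈ typing n → n ∈ D.Lit) ∧
    (∀ T : Shape, some T ∈ typing n →
      n ∈ D.Iri ∪ D.Blank ∧
      ∀ tc ∈ S.δ T,
        (∀ m : Dom, (n, tc.prop, m) ∈ G → tc.target ∈ typing m) ∧
        multOk tc.mult {m : Dom | (n, tc.prop, m) ∈ G})

/-- A fact `R(t)` of a relational instance. -/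
structure RelFact (Dom RSym : Type) (ar : RSym → ℕ) where
  sym : RSym
  args : Fin (ar sym) → Dom

/-- A functional dependency `R : X → Y`. -/
structure Fd (RSym : Type) (ar : RSym → ℕ) where
  sym : RSym
  X : Set (Fin (ar sym))
  Y : Set (Fin (ar sym))

/-- The fd `φ` holds in the relational instance `I`. -/
def fdHolds {Dom RSym : Type} {ar : RSym → ℕ} (I : Set (RelFact Dom RSym ar))
    (φ : Fd RSym ar) : Prop :=
  ∀ t1 t2 : Fin (ar φ.sym) → Dom,
    (⟨φ.sym, t1⟩ : RelFact Dom RSym ar) ∈ I →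
    (⟨φ.sym, t2⟩ : RelFact Dom RSym ar) ∈ I →
    (∀ i ∈ φ.X, t1 i = t2 i) → ∀ j ∈ φ.Y, t1 j = t2 j

/-- A valid instance of the relational schema: finite, over `Lit \ NullLit`,
satisfying all functional dependencies. -/
def validInst {Dom RSym : Type} {ar : RSym → ℕ} (D : RDFDom Dom)
    (fds : Set (Fd RSym ar)) (I : Set (RelFact Dom RSym ar)) : Prop :=
  I.Finite ∧ (∀ F ∈ I, ∀ i, F.args i ∈ D.Lit \ D.NullLit) ∧ ∀ φ ∈ fds, fdHolds I φ

/-- A relational atom with variables in `V`. -/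
structure Atom (RSym : Type) (ar : RSym → ℕ) (V : Type) where
  sym : RSym
  args : Fin (ar sym) → V

/-- The object term of an std: either a variable or a functional term `g(z)`. -/
inductive Obj (FSym : Type) (far : FSym → ℕ) (V : Type) : Type
  | var (v : V)
  | app (g : FSym) (z : Fin (far g) → V)

/-- A fully-typed source-to-target tgd
`∀x,y. φ(x,y) ⇒ Triple(f(x), p, o) ∧ T_s(f(x)) ∧ T_o(o)`, where `x` has length
`far f`, `y` has length `ny`, and the body uses exactly the variables `x ∪ y`. -/
structure Std (Dom RSym FSym : Type) (ar : RSym → ℕ) (far : FSym → ℕ) where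
  f : FSym
  ny : ℕ
  body : Set (Atom RSym ar (Fin (far f) ⊕ Fin ny))
  bodyFinite : body.Finite
  covers : ∀ v : Fin (far f) ⊕ Fin ny, ∃ a ∈ body, ∃ i, a.args i = v
  p : Dom
  obj : Obj FSym far (Fin (far f) ⊕ Fin ny)

/-- The variables `x ∪ y` of an std. -/
abbrev Std.Var {Dom RSym FSym : Type} {ar : RSym → ℕ} {far : FSym → ℕ}
    (σ : Std Dom RSym FSym ar far) : Type :=
  Fin (far σ.f) ⊕ Fin σ.ny

/-- `ν^{F_int}(o)`. -/
def Obj.eval {Dom FSym : Type} {far : FSym → ℕ} {V : Type}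
    (Fint : (f : FSym) → (Fin (far f) → Dom) → Dom) (ν : V → Dom) :
    Obj FSym far V → Dom
  | .var v => ν v
  | .app g z => Fint g (fun i => ν (z i))

/-- The type `T_o` of the object of an std: `Lit` (i.e. `none`) for a variable,
`type(g)` for a functional term `g(z)`. -/
def Std.objType {Dom RSym FSym Shape : Type} {ar : RSym → ℕ} {far : FSym → ℕ}
    (ftype : FSym → Shape) (σ : Std Dom RSym FSym ar far) : Option Shape :=
  match σ.obj with
  | .var _ => none
  | .app g _ => some (ftype g)

/-- The valuation `ν` maps every atom of the body of `σ` to a fact of `I`. -/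
def bodyHolds {Dom RSym FSym : Type} {ar : RSym → ℕ} {far : FSym → ℕ}
    (σ : Std Dom RSym FSym ar far) (ν : σ.Var → Dom)
    (I : Set (RelFact Dom RSym ar)) : Prop :=
  ∀ a ∈ σ.body, (⟨a.sym, fun i => ν (a.args i)⟩ : RelFact Dom RSym ar) ∈ I

/-- `I ∪ J ∪ F_int ⊨ σ`. -/
def stdSat {Dom RSym FSym Shape : Type} {ar : RSym → ℕ} {far : FSym → ℕ}
    (Fint : (f : FSym) → (Fin (far f) → Dom) → Dom) (ftype : FSym → Shape)
    (σ : Std Dom RSym FSym ar far) (I : Set (RelFact Dom RSym ar))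
    (J : Set (Fact Dom Shape)) : Prop :=
  ∀ ν : σ.Var → Dom, bodyHolds σ ν I →
    Fact.triple (Fint σ.f fun i => ν (Sum.inl i)) σ.p (Obj.eval Fint ν σ.obj) ∈ J ∧
    Fact.shape (ftype σ.f) (Fint σ.f fun i => ν (Sum.inl i)) ∈ J ∧
    factOf (σ.objType ftype) (Obj.eval Fint ν σ.obj) ∈ J

/-- The std conforms to the schema `S`: if `δ(T_s)` contains a triple constraint
on the property `p` of the std then its target is `T_o`. -/
def Std.conforms {Dom RSym FSym Shape : Type} {ar : RSym → ℕ} {far : FSym → ℕ}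
    (D : RDFDom Dom) (S : ShEx Dom Shape D) (ftype : FSym → Shape)
    (σ : Std Dom RSym FSym ar far) : Prop :=
  ∀ tc ∈ S.δ (ftype σ.f), tc.prop = σ.p → tc.target = σ.objType ftype

/-- A fully-typed data exchange setting `(R, S, Σ_st, F, F_int)`. -/
structure DES (Dom RSym FSym Shape : Type) (ar : RSym → ℕ) (far : FSym → ℕ) where
  D : RDFDom Dom
  shex : ShEx Dom Shape D
  fds : Set (Fd RSym ar)
  fdsFin : fds.Finite
  ftype : FSym → Shape
  Fint : (f : FSym) → (Fin (far f) → Dom) → Dom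
  FintIri : ∀ f args, Fint f args ∈ D.Iri
  FintInj : ∀ f, Function.Injective (Fint f)
  FintDisj : ∀ f g, f ≠ g → ∀ a b, Fint f a ≠ Fint g b
  stds : Set (Std Dom RSym FSym ar far)
  stdsFin : stds.Finite
  stP : ∀ σ ∈ stds, σ.p ∈ D.Iri
  stConf : ∀ σ ∈ stds, σ.conforms D shex ftype

variable {Dom RSym FSym Shape : Type} {ar : RSym → ℕ} {far : FSym → ℕ}

/-- `σ1, σ2` are a contentious pair of stds of the setting. -/
def contentious (des : DES Dom RSym FSym Shape ar far)
    (σ1 σ2 : Std Dom RSym FSym ar far) : Prop :=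
  σ1 ∈ des.stds ∧ σ2 ∈ des.stds ∧ σ1.f = σ2.f ∧ σ1.p = σ2.p ∧
  ∃ tc ∈ des.shex.δ (des.ftype σ1.f), tc.prop = σ1.p ∧
    tc.target = σ1.objType des.ftype ∧ (tc.mult = Mult.one ∨ tc.mult = Mult.opt)

/-- `σ1, σ2` are functionally overlapping. -/
def funOverlap (des : DES Dom RSym FSym Shape ar far)
    (σ1 σ2 : Std Dom RSym FSym ar far) : Prop :=
  ∀ I : Set (RelFact Dom RSym ar), validInst des.D des.fds I →
    ∀ (ν1 : σ1.Var → Dom) (ν2 : σ2.Var → Dom),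
      bodyHolds σ1 ν1 I → bodyHolds σ2 ν2 I →
      HEq (fun i : Fin (far σ1.f) => ν1 (Sum.inl i))
          (fun i : Fin (far σ2.f) => ν2 (Sum.inl i)) →
      Obj.eval des.Fint ν1 σ1.obj = Obj.eval des.Fint ν2 σ2.obj

/-- The setting is key-covered. -/
def keyCovered (des : DES Dom RSym FSym Shape ar far) : Prop :=
  ∀ σ1 σ2, contentious des σ1 σ2 → funOverlap des σ1 σ2

/-- `J` is a solution for the valid source instance `I`. -/
def isSolution (des : DES Dom RSym FSym Shape ar far)
    (I : Set (RelFact Dom RSym ar)) (J : Set (Fact Dom Shape)) : Prop :=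
  (∀ σ ∈ des.stds, stdSat des.Fint des.ftype σ I J) ∧ satSigma des.D des.shex J

/-- The setting is consistent: every valid source instance has a solution. -/
def consistent (des : DES Dom RSym FSym Shape ar far) : Prop :=
  ∀ I : Set (RelFact Dom RSym ar), validInst des.D des.fds I →
    ∃ J : Set (Fact Dom Shape), isSolution des I J

/-- The canonical target instance `J_0` of `I`. -/
def canonical (des : DES Dom RSym FSym Shape ar far)
    (I : Set (RelFact Dom RSym ar)) : Set (Fact Dom Shape) :=
  {F | ∃ σ ∈ des.stds, ∃ ν : σ.Var → Dom, bodyHolds σ ν I ∧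
    (F = Fact.triple (des.Fint σ.f fun i => ν (Sum.inl i)) σ.p (Obj.eval des.Fint ν σ.obj) ∨
     F = Fact.shape (des.ftype σ.f) (des.Fint σ.f fun i => ν (Sum.inl i)) ∨
     F = factOf (σ.objType des.ftype) (Obj.eval des.Fint ν σ.obj))}

/-- The vector `z` of variables of the object term of an std (of length 1 if the
object is a variable). -/
def Std.objVars (σ : Std Dom RSym FSym ar far) : Σ n : ℕ, Fin n → σ.Var :=
  match σ.obj with
  | .var v => ⟨1, fun _ => v⟩
  | .app g z => ⟨far g, z⟩

/-- The view `V_σ(I)` as a set of pairs of tuples (encoded as lists):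
the values of `x` and the values of `z`. -/
def viewRel (σ : Std Dom RSym FSym ar far) (I : Set (RelFact Dom RSym ar)) :
    Set (List Dom × List Dom) :=
  {ab | ∃ ν : σ.Var → Dom, bodyHolds σ ν I ∧
        ab.1 = List.ofFn (fun i : Fin (far σ.f) => ν (Sum.inl i)) ∧
        ab.2 = List.ofFn (fun j => ν (σ.objVars.2 j))}

/-- The object terms of `σ1` and `σ2` are either both variables or both functional
terms over the same function symbol. -/
def objMatch (σ1 σ2 : Std Dom RSym FSym ar far) : Prop :=
  (∃ v1 v2, σ1.obj = Obj.var v1 ∧ σ2.obj = Obj.var v2) ∨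
  (∃ g z1 z2, σ1.obj = Obj.app g z1 ∧ σ2.obj = Obj.app g z2)

/-- `(T, p)` is a pair for which a fresh value `b^{T,p}` is needed:
`δ(T)` has a constraint on `p` with multiplicity in `{1, +}`. -/
def relevantBP {Dom Shape : Type} {D : RDFDom Dom} (S : ShEx Dom Shape D)
    (T : Shape) (p : Dom) : Prop :=
  ∃ tc ∈ S.δ T, tc.prop = p ∧ (tc.mult = Mult.one ∨ tc.mult = Mult.plus)

/-- `J_1 = { T'(b^{T,p}) | p :: T'^μ ∈ δ(T), μ ∈ {1,+} }`. -/
def J1set {Dom Shape : Type} {D : RDFDom Dom} (S : ShEx Dom Shape D)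
    (b : Shape → Dom → Dom) : Set (Fact Dom Shape) :=
  {F | ∃ T : Shape, ∃ tc ∈ S.δ T, (tc.mult = Mult.one ∨ tc.mult = Mult.plus) ∧
       F = factOf tc.target (b T tc.prop)}

/-- `J_2 = { Triple(b^{T,p}, q, b^{T_1,q}) | T_1(b^{T,p}) ∈ J_1, q :: T_2^μ ∈ δ(T_1), μ ∈ {1,+} }`. -/
def J2set {Dom Shape : Type} {D : RDFDom Dom} (S : ShEx Dom Shape D)
    (b : Shape → Dom → Dom) : Set (Fact Dom Shape) :=
  {F | ∃ (T1 : Shape) (n : Dom), Fact.shape T1 n ∈ J1set S b ∧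
       ∃ tc2 ∈ S.δ T1, (tc2.mult = Mult.one ∨ tc2.mult = Mult.plus) ∧
       F = Fact.triple n tc2.prop (b T1 tc2.prop)}

/-- `J_3 = { Triple(a, p, b^{T,p}) | T(a) ∈ J, p :: T'^μ ∈ δ(T), μ ∈ {1,+},
no Triple(a, p, b') in J }`. -/
def J3set {Dom Shape : Type} {D : RDFDom Dom} (S : ShEx Dom Shape D)
    (b : Shape → Dom → Dom) (J : Set (Fact Dom Shape)) : Set (Fact Dom Shape) :=
  {F | ∃ (T : Shape) (n : Dom), Fact.shape T n ∈ J ∧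
       ∃ tc ∈ S.δ T, (tc.mult = Mult.one ∨ tc.mult = Mult.plus) ∧
       (¬ ∃ y : Dom, Fact.triple n tc.prop y ∈ J) ∧
       F = Fact.triple n tc.prop (b T tc.prop)}

/-- The value `d` occurs in the fact `F`. -/
def occursIn {Dom Shape : Type} (d : Dom) : Fact Dom Shape → Prop
  | .triple s p o => d = s ∨ d = p ∨ d = o
  | .lit n => d = n
  | .shape _ n => d = n

variable {Dom RSym FSym Shape : Type} {ar : RSym → ℕ} {far : FSym → ℕ}

theorem stmt2 [Countable Dom] [Finite RSym] [Finite FSym] [Finite Shape]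
    (des : DES Dom RSym FSym Shape ar far)
    (hcons : consistent des) : keyCovered des := by
  rintro σ1 σ2 ⟨h1, h2, hf, hp, tc, htc, htp, -, hm⟩ I hI ν1 ν2 hb1 hb2 hx
  obtain ⟨J, hst, -, -, hJ⟩ := hcons I hI
  obtain ⟨a1, b1, -⟩ := hst σ1 h1 ν1 hb1
  obtain ⟨a2, -, -⟩ := hst σ2 h2 ν2 hb2
  have key : ∀ (f g : FSym) (a : Fin (far f) → Dom) (b : Fin (far g) → Dom),
      f = g → HEq a b → des.Fint f a = des.Fint g b := by
    intro f g a b h hab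
    subst h
    rw [eq_of_heq hab]
  rw [← key _ _ _ _ hf hx, ← hp, ← htp] at a2
  rw [← htp] at a1
  exact (hJ _ tc htc).2.2 hm _ _ _ b1 a1 a2

end RdfDE
end

section
/- Let DES = (R, S, Σ_st, F, F_int) be a fully-typed data exchange setting. If DES is key-covered, then DES is consistent; that is, for every valid instance I of R there exists an instance J of G_T such that I ∪ J ∪ F_int ⊨ σ for every σ ∈ Σ_st and J satisfies every sentence of Σ_S. -/
namespace RdfDE

variable {Dom RSym FSym Shape : Type} {ar : RSym → ℕ} {far : FSym → ℕ}

variable {Dom RSym FSym Shape : Type} {ar : RSym → ℕ} {far : FSym → ℕ}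

theorem canon_shape (des : DES Dom RSym FSym Shape ar far) (I : Set (RelFact Dom RSym ar))
    (T : Shape) (n : Dom) (h : Fact.shape T n ∈ canonical des I) :
    ∃ f a, T = des.ftype f ∧ n = des.Fint f a := by
  obtain ⟨σ, -, ν, -, h | h | h⟩ := h
  · cases h
  · cases h
    exact ⟨_, _, rfl, rfl⟩
  · unfold Std.objType at h
    cases ho : σ.obj with
    | var v => rw [ho] at h; cases h
    | app g z =>
      rw [ho] at h
      cases h
      exact ⟨g, _, rfl, rfl⟩

theorem canon_lit (des : DES Dom RSym FSym Shape ar far) (I : Set (RelFact Dom RSym ar))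
    (hI : validInst des.D des.fds I) (n : Dom) (h : Fact.lit n ∈ canonical des I) :
    n ∈ des.D.Lit := by
  obtain ⟨σ, -, ν, hb, h | h | h⟩ := h
  · cases h
  · cases h
  · unfold Std.objType at h
    cases ho : σ.obj with
    | app g z => rw [ho] at h; cases h
    | var v =>
      rw [ho] at h
      cases h
      obtain ⟨a, ha, i, hi⟩ := σ.covers v
      have := (hI.2.1 _ (hb a ha) i).1
      simp only [hi] at this
      exact this

theorem canon_triple (des : DES Dom RSym FSym Shape ar far) (I : Set (RelFact Dom RSym ar))
    (s p o : Dom) (h : Fact.triple s p o ∈ canonical des I) :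
    ∃ σ ∈ des.stds, ∃ ν : σ.Var → Dom, bodyHolds σ ν I ∧
      s = des.Fint σ.f (fun i => ν (Sum.inl i)) ∧ p = σ.p ∧ o = Obj.eval des.Fint ν σ.obj := by
  obtain ⟨σ, hσ, ν, hb, h | h | h⟩ := h
  · cases h
    exact ⟨σ, hσ, ν, hb, rfl, rfl, rfl⟩
  · cases h
  · cases ho : σ.objType des.ftype <;> rw [ho] at h <;> cases h

theorem fint_eq (des : DES Dom RSym FSym Shape ar far) {f g : FSym} {a : Fin (far f) → Dom}
    {b : Fin (far g) → Dom} (h : des.Fint f a = des.Fint g b) : f = g ∧ HEq a b := by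
  by_cases hfg : f = g
  · subst hfg
    exact ⟨rfl, heq_of_eq (des.FintInj f h)⟩
  · exact absurd h (des.FintDisj f g hfg a b)

/-- All typing facts: canonical ones and one default node per type. -/
def typed (des : DES Dom RSym FSym Shape ar far) (I : Set (RelFact Dom RSym ar))
    (c : Option Shape → Dom) : Set (Fact Dom Shape) :=
  canonical des I ∪ {F | ∃ t, F = factOf t (c t)}

/-- Completion triples. -/
def compl (des : DES Dom RSym FSym Shape ar far) (I : Set (RelFact Dom RSym ar))
    (c : Option Shape → Dom) : Set (Fact Dom Shape) :=
  {F | ∃ (T : Shape) (n : Dom), Fact.shape T n ∈ typed des I c ∧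
       ∃ tc ∈ des.shex.δ T,
       (¬ ∃ y : Dom, Fact.triple n tc.prop y ∈ canonical des I) ∧
       F = Fact.triple n tc.prop (c tc.target)}

theorem stmt3 [Countable Dom] [Finite RSym] [Finite FSym] [Finite Shape]
    (des : DES Dom RSym FSym Shape ar far)
    (hkc : keyCovered des) : consistent des := by
  intro I hI
  have : ∃ b : Shape → Dom, Function.Injective b ∧ ∀ T, b T ∈ des.D.Blank := by
    have := des.D.infBlank.to_subtype
    obtain ⟨k, ⟨e⟩⟩ := Finite.exists_equiv_fin Shape
    let g := Infinite.natEmbedding des.D.Blank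
    refine ⟨fun T => (g (e T : ℕ) : Dom), ?_, fun T => (g _).2⟩
    intro T T' h
    exact e.injective (Fin.ext (g.injective (Subtype.ext h)))
  obtain ⟨b, binj, bB⟩ := this
  obtain ⟨l, hl⟩ := des.D.infLit.nonempty
  let c : Option Shape → Dom := fun t => t.elim l b
  have hIB : ∀ x, x ∈ des.D.Iri → x ∈ des.D.Blank → False := fun x h1 h2 =>
    Set.disjoint_left.1 des.D.disjIB h1 h2
  -- shape facts
  have shp : ∀ T n, Fact.shape T n ∈ typed des I c →
      (∃ f a, T = des.ftype f ∧ n = des.Fint f a) ∨ n = b T := by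
    rintro T n (h | ⟨t, h⟩)
    · exact Or.inl (canon_shape des I T n h)
    · cases t with
      | none => cases h
      | some t => cases h; exact Or.inr rfl
  have uniq : ∀ T T' n, Fact.shape T n ∈ typed des I c → Fact.shape T' n ∈ typed des I c →
      T = T' := by
    intro T T' n h h'
    rcases shp T n h with ⟨f, a, rfl, hn⟩ | hn <;>
      rcases shp T' n h' with ⟨f', a', rfl, hn'⟩ | hn'
    · rw [(fint_eq des (hn.symm.trans hn')).1]
    · exact (hIB n (hn ▸ des.FintIri _ _) (hn' ▸ bB _)).elim
    · exact (hIB n (hn' ▸ des.FintIri _ _) (hn ▸ bB _)).elim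
    · exact binj (hn.symm.trans hn')
  have red : ∀ t n, factOf t n ∈ typed des I c ∪ compl des I c → factOf t n ∈ typed des I c := by
    rintro t n (h | ⟨T, m, -, tc, -, -, h⟩)
    · exact h
    · cases t <;> cases h
  have reds : ∀ T n, Fact.shape T n ∈ typed des I c ∪ compl des I c →
      Fact.shape T n ∈ typed des I c := fun T n h => red (some T) n h
  have canonS : ∀ σ ∈ des.stds, ∀ ν : σ.Var → Dom, bodyHolds σ ν I →
      Fact.shape (des.ftype σ.f) (des.Fint σ.f (fun i => ν (Sum.inl i))) ∈ typed des I c :=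
    fun σ hσ ν hb => Or.inl ⟨σ, hσ, ν, hb, Or.inr (Or.inl rfl)⟩
  have redt : ∀ x p y, Fact.triple x p y ∈ typed des I c ∪ compl des I c →
      Fact.triple x p y ∈ canonical des I ∨ ∃ T, Fact.shape T x ∈ typed des I c ∧
       ∃ tc ∈ des.shex.δ T, tc.prop = p ∧ y = c tc.target ∧
       (¬ ∃ y : Dom, Fact.triple x p y ∈ canonical des I) := by
    rintro x p y ((h | ⟨t, h⟩) | ⟨T, m, h1, tc, h2, h3, h⟩)
    · exact Or.inl h
    · cases t <;> cases h
    · cases h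
      exact Or.inr ⟨T, h1, tc, h2, rfl, rfl, h3⟩
  refine ⟨typed des I c ∪ compl des I c, ?_, ?_, ?_, ?_⟩
  · intro σ hσ ν hb
    exact ⟨Or.inl (Or.inl ⟨σ, hσ, ν, hb, Or.inl rfl⟩),
      Or.inl (Or.inl ⟨σ, hσ, ν, hb, Or.inr (Or.inl rfl)⟩),
      Or.inl (Or.inl ⟨σ, hσ, ν, hb, Or.inr (Or.inr rfl)⟩)⟩
  · intro T n h
    rcases shp T n (reds T n h) with ⟨f, a, -, hn⟩ | hn
    · exact Or.inl (hn ▸ des.FintIri _ _)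
    · exact Or.inr (hn ▸ bB _)
  · intro n h
    rcases red none n h with h | ⟨t, h⟩
    · exact canon_lit des I hI n h
    · cases t with
      | none => cases h; exact hl
      | some t => cases h
  · intro T tc htc
    refine ⟨?_, ?_, ?_⟩
    · intro x y hx hxy
      have hx := reds T x hx
      rcases redt _ _ _ hxy with h | ⟨T', hx', tc', htc', hp, hy, -⟩
      · obtain ⟨σ, hσ, ν, hb, rfl, hp, rfl⟩ := canon_triple des I _ _ _ h
        have hT := uniq _ _ _ hx (canonS σ hσ ν hb)
        subst hT
        rw [des.stConf σ hσ tc htc hp]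
        exact Or.inl (Or.inl ⟨σ, hσ, ν, hb, Or.inr (Or.inr rfl)⟩)
      · have hT := uniq _ _ _ hx hx'
        subst hT
        have := des.shex.uniqueProp T tc' htc' tc htc hp
        subst this
        rw [hy]
        exact Or.inl (Or.inr ⟨tc'.target, rfl⟩)
    · intro _ x hx
      have hx := reds T x hx
      by_cases h : ∃ y : Dom, Fact.triple x tc.prop y ∈ canonical des I
      · obtain ⟨y, hy⟩ := h
        exact ⟨y, Or.inl (Or.inl hy)⟩
      · exact ⟨c tc.target, Or.inr ⟨T, x, hx, tc, htc, h, rfl⟩⟩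
    · intro hm x y z hx hxy hxz
      have hx := reds T x hx
      rcases redt _ _ _ hxy with h | ⟨T', hx', tc', htc', hp, hy, hn⟩ <;>
        rcases redt _ _ _ hxz with h2 | ⟨T2, hx2, tc2, htc2, hp2, hz, hn2⟩
      · obtain ⟨σ, hσ, ν, hb, hs, hp, rfl⟩ := canon_triple des I _ _ _ h
        obtain ⟨σ2, hσ2, ν2, hb2, hs2, hp2, rfl⟩ := canon_triple des I _ _ _ h2
        obtain ⟨hf, hh⟩ := fint_eq des (hs.symm.trans hs2)
        have hT := uniq _ _ _ hx (hs ▸ canonS σ hσ ν hb)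
        subst hT
        exact hkc σ σ2 ⟨hσ, hσ2, hf, hp.symm.trans hp2, tc, htc, hp,
          des.stConf σ hσ tc htc hp, hm⟩ I hI ν ν2 hb hb2 hh
      · exact (hn2 ⟨_, h⟩).elim
      · exact (hn ⟨_, h2⟩).elim
      · have hT := uniq _ _ _ hx hx'
        subst hT
        have hT := uniq _ _ _ hx hx2
        subst hT
        have := des.shex.uniqueProp T tc' htc' tc2 htc2 (hp.trans hp2.symm)
        rw [hy, hz, this]

end RdfDE
end

section
/- Let S = (T, δ) be a ShEx schema. For each T ∈ T and each triple constraint p :: T'^μ ∈ δ(T) with μ ∈ {1, +}, fix a value b^{T,p} ∈ Dom such that the values b^{T,p} are pairwise distinct, and b^{T,p} ∈ NullLit if T' = Lit while b^{T,p} ∈ Blank if T' ∈ T. Define J_1 = { T'(b^{T,p}) | T ∈ T, p :: T'^μ ∈ δ(T), μ ∈ {1, +} } and J_2 = { Triple(b^{T,p}, q, b^{T_1,q}) | T_1(b^{T,p}) ∈ J_1 with T_1 ∈ T, and q :: T_2^μ ∈ δ(T_1) with μ ∈ {1, +} }. Then the instance J_1 ∪ J_2 of G_T satisfies every sentence of Σ_S.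 -/
namespace RdfDE

variable {Dom RSym FSym Shape : Type} {ar : RSym → ℕ} {far : FSym → ℕ}

variable {Dom RSym FSym Shape : Type} {ar : RSym → ℕ} {far : FSym → ℕ}

theorem aux_shape {Dom Shape : Type} {D : RDFDom Dom} (S : ShEx Dom Shape D)
    (b : Shape → Dom → Dom) (T : Shape) (n : Dom)
    (h : Fact.shape T n ∈ J1set S b ∪ J2set S b) :
    ∃ T0 : Shape, ∃ tc ∈ S.δ T0, (tc.mult = Mult.one ∨ tc.mult = Mult.plus) ∧
      tc.target = some T ∧ n = b T0 tc.prop := by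
  rcases h with ⟨T0, tc, htc, hm, he⟩ | ⟨T1, m, _, tc, _, _, he⟩
  · refine ⟨T0, tc, htc, hm, ?_⟩
    rcases ht : tc.target with _ | T' <;> rw [ht] at he <;> simp only [factOf] at he
    · cases he
    · cases he
      exact ⟨rfl, rfl⟩
  · cases he

theorem aux_lit {Dom Shape : Type} {D : RDFDom Dom} (S : ShEx Dom Shape D)
    (b : Shape → Dom → Dom) (n : Dom)
    (h : Fact.lit n ∈ J1set S b ∪ J2set S b) :
    ∃ T0 : Shape, ∃ tc ∈ S.δ T0, (tc.mult = Mult.one ∨ tc.mult = Mult.plus) ∧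
      tc.target = none ∧ n = b T0 tc.prop := by
  rcases h with ⟨T0, tc, htc, hm, he⟩ | ⟨T1, m, _, tc, _, _, he⟩
  · refine ⟨T0, tc, htc, hm, ?_⟩
    rcases ht : tc.target with _ | T' <;> rw [ht] at he <;> simp only [factOf] at he
    · cases he
      exact ⟨rfl, rfl⟩
    · cases he
  · cases he

theorem aux_triple {Dom Shape : Type} {D : RDFDom Dom} (S : ShEx Dom Shape D)
    (b : Shape → Dom → Dom) (x p y : Dom)
    (h : Fact.triple x p y ∈ J1set S b ∪ J2set S b) :
    ∃ T1 : Shape, Fact.shape T1 x ∈ J1set S b ∧ ∃ tc ∈ S.δ T1,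
      (tc.mult = Mult.one ∨ tc.mult = Mult.plus) ∧ tc.prop = p ∧ y = b T1 p := by
  rcases h with ⟨T0, tc, htc, hm, he⟩ | ⟨T1, m, hs, tc, htc, hm, he⟩
  · rcases ht : tc.target with _ | T' <;> rw [ht] at he <;> simp only [factOf] at he <;> cases he
  · cases he
    exact ⟨T1, hs, tc, htc, hm, rfl, rfl⟩

theorem stmt6 {Dom Shape : Type} [Countable Dom] [Finite Shape]
    (D : RDFDom Dom) (S : ShEx Dom Shape D) (b : Shape → Dom → Dom)
    (hinj : ∀ T p T' p', relevantBP S T p → relevantBP S T' p' →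
      b T p = b T' p' → T = T' ∧ p = p')
    (hsort : ∀ T : Shape, ∀ tc ∈ S.δ T, (tc.mult = Mult.one ∨ tc.mult = Mult.plus) →
      (tc.target = none → b T tc.prop ∈ D.NullLit) ∧
      (∀ T1 : Shape, tc.target = some T1 → b T tc.prop ∈ D.Blank)) :
    satSigma D S (J1set S b ∪ J2set S b) := by
  have huniq : ∀ T T' x, Fact.shape T x ∈ J1set S b ∪ J2set S b →
      Fact.shape T' x ∈ J1set S b ∪ J2set S b → T = T' := by
    intro T T' x h h'
    obtain ⟨A, c, hc, hm, ht, hx⟩ := aux_shape S b T x h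
    obtain ⟨A', c', hc', hm', ht', hx'⟩ := aux_shape S b T' x h'
    obtain ⟨hA, hp⟩ := hinj A c.prop A' c'.prop ⟨c, hc, rfl, hm⟩ ⟨c', hc', rfl, hm'⟩
      (hx.symm.trans hx')
    subst hA
    have := S.uniqueProp A c hc c' hc' hp
    subst this
    exact Option.some.inj (ht.symm.trans ht')
  have htrip : ∀ T x p y, Fact.shape T x ∈ J1set S b ∪ J2set S b →
      Fact.triple x p y ∈ J1set S b ∪ J2set S b → y = b T p ∧
      ∃ tc ∈ S.δ T, (tc.mult = Mult.one ∨ tc.mult = Mult.plus) ∧ tc.prop = p := by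
    intro T x p y h h'
    obtain ⟨T1, hs, c, hc, hm, hp, hy⟩ := aux_triple S b x p y h'
    have := huniq T T1 x h (Or.inl hs)
    subst this
    exact ⟨hy, c, hc, hm, hp⟩
  refine ⟨?_, ?_, ?_⟩
  · intro T n h
    obtain ⟨A, c, hc, hm, ht, hx⟩ := aux_shape S b T n h
    rw [hx]
    exact Or.inr ((hsort A c hc hm).2 T ht)
  · intro n h
    obtain ⟨A, c, hc, hm, ht, hx⟩ := aux_lit S b n h
    rw [hx]
    exact D.nullSub ((hsort A c hc hm).1 ht)
  · intro T tc htc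
    refine ⟨?_, ?_, ?_⟩
    · intro x y hx hy
      obtain ⟨he, c, hc, hm, hp⟩ := htrip T x _ y hx hy
      have := S.uniqueProp T c hc tc htc hp
      subst this
      rw [he]
      exact Or.inl ⟨T, c, hc, hm, rfl⟩
    · intro hm x hx
      refine ⟨b T tc.prop, Or.inr ⟨T, x, ?_, tc, htc, hm, rfl⟩⟩
      rcases hx with hx | ⟨_, _, _, _, _, _, he⟩
      · exact hx
      · cases he
    · intro _ x y z hx hy hz
      exact (htrip T x _ y hx hy).1.trans (htrip T x _ z hx hz).1.symm

end RdfDE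
end

section
/- Let S = (T, δ) be a ShEx schema, and fix values b^{T,p} and instances J_1, J_2 as follows: for each T ∈ T and each p :: T'^μ ∈ δ(T) with μ ∈ {1, +}, the b^{T,p} are pairwise distinct, with b^{T,p} ∈ NullLit if T' = Lit and b^{T,p} ∈ Blank if T' ∈ T; J_1 = { T'(b^{T,p}) | T ∈ T, p :: T'^μ ∈ δ(T), μ ∈ {1, +} }; J_2 = { Triple(b^{T,p}, q, b^{T_1,q}) | T_1(b^{T,p}) ∈ J_1 with T_1 ∈ T, and q :: T_2^μ ∈ δ(T_1) with μ ∈ {1, +} }. Let J be an instance of G_T such that: (i) every fact Triple(s,p,o) ∈ J has s ∈ Iri, p ∈ Iri, o ∈ Iri ∪ Lit, every fact T(n) ∈ J with T ∈ T has n ∈ Iri, and every fact Lit(n) ∈ J has n ∈ Lit; (ii) J satisfies every sentence tc(T, T', p) and every sentence mult≤1(T, p) of Σ_S; (iii) no value b^{T,p} occurs in any fact of J; and (iv) every value carries at most one type in J, i.e., if T(n) ∈ J and T''(n) ∈ J with T, T'' ∈ T then T = T''. Define J_3 = { Triple(a, p, b^{T,p}) | T(a) ∈ J with T ∈ T, p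 :: T'^μ ∈ δ(T) with μ ∈ {1, +}, and there is no b' with Triple(a, p, b') ∈ J }. Then the instance G = J ∪ J_1 ∪ J_2 ∪ J_3 satisfies every sentence of Σ_S. -/
namespace RdfDE

variable {Dom RSym FSym Shape : Type} {ar : RSym → ℕ} {far : FSym → ℕ}

variable {Dom RSym FSym Shape : Type} {ar : RSym → ℕ} {far : FSym → ℕ}

theorem stmt7 {Dom Shape : Type} [Countable Dom] [Finite Shape]
    (D : RDFDom Dom) (S : ShEx Dom Shape D) (b : Shape → Dom → Dom)
    (J : Set (Fact Dom Shape))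
    (hinj : ∀ T p T' p', relevantBP S T p → relevantBP S T' p' →
      b T p = b T' p' → T = T' ∧ p = p')
    (hsort : ∀ T : Shape, ∀ tc ∈ S.δ T, (tc.mult = Mult.one ∨ tc.mult = Mult.plus) →
      (tc.target = none → b T tc.prop ∈ D.NullLit) ∧
      (∀ T1 : Shape, tc.target = some T1 → b T tc.prop ∈ D.Blank))
    (hJtriple : ∀ s p o : Dom, Fact.triple s p o ∈ J →
      s ∈ D.Iri ∧ p ∈ D.Iri ∧ o ∈ D.Iri ∪ D.Lit)
    (hJshape : ∀ (T : Shape) (n : Dom), Fact.shape T n ∈ J → n ∈ D.Iri)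
    (hJlit : ∀ n : Dom, Fact.lit n ∈ J → n ∈ D.Lit)
    (hJtc : ∀ T : Shape, ∀ tc ∈ S.δ T, ∀ x y : Dom,
      Fact.shape T x ∈ J → Fact.triple x tc.prop y ∈ J → factOf tc.target y ∈ J)
    (hJmult : ∀ T : Shape, ∀ tc ∈ S.δ T, (tc.mult = Mult.one ∨ tc.mult = Mult.opt) →
      ∀ x y z : Dom, Fact.shape T x ∈ J → Fact.triple x tc.prop y ∈ J →
        Fact.triple x tc.prop z ∈ J → y = z)
    (hfresh : ∀ T p, relevantBP S T p → ∀ F ∈ J, ¬ occursIn (b T p) F)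
    (huniq : ∀ (T T'' : Shape) (n : Dom),
      Fact.shape T n ∈ J → Fact.shape T'' n ∈ J → T = T'') :
    satSigma D S (J ∪ J1set S b ∪ J2set S b ∪ J3set S b J) := by
  have hd : ∀ n, n ∈ D.Iri → n ∈ D.Blank → False := fun n h1 h2 =>
    Set.disjoint_left.mp D.disjIB h1 h2
  -- shape facts of J1
  have h1 : ∀ T n, Fact.shape T n ∈ J1set S b → ∃ T0, ∃ tc ∈ S.δ T0,
      (tc.mult = Mult.one ∨ tc.mult = Mult.plus) ∧ tc.target = some T ∧ n = b T0 tc.prop := by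
    rintro T n ⟨T0, tc, htc, hm, hF⟩
    refine ⟨T0, tc, htc, hm, ?_⟩
    cases ht : tc.target with
    | none => rw [ht] at hF; simp [factOf] at hF
    | some T' =>
      rw [ht] at hF
      simp only [factOf, Fact.shape.injEq] at hF
      exact ⟨by rw [hF.1], hF.2⟩
  have h1l : ∀ n, Fact.lit n ∈ J1set S b → n ∈ D.Lit := by
    rintro n ⟨T0, tc, htc, hm, hF⟩
    cases ht : tc.target with
    | some T' => rw [ht] at hF; simp [factOf] at hF
    | none =>
      rw [ht] at hF
      simp only [factOf, Fact.lit.injEq] at hF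
      rw [hF]
      exact D.nullSub ((hsort T0 tc htc hm).1 ht)
  have h1b : ∀ T n, Fact.shape T n ∈ J1set S b → n ∈ D.Blank := by
    intro T n h
    obtain ⟨T0, tc, htc, hm, ht, rfl⟩ := h1 T n h
    exact (hsort T0 tc htc hm).2 T ht
  have h1u : ∀ T T' n, Fact.shape T n ∈ J1set S b → Fact.shape T' n ∈ J1set S b → T = T' := by
    intro T T' n h h'
    obtain ⟨T0, tc, htc, hm, ht, hn⟩ := h1 T n h
    obtain ⟨T0', tc', htc', hm', ht', hn'⟩ := h1 T' n h'
    obtain ⟨rfl, hp⟩ := hinj T0 tc.prop T0' tc'.prop ⟨tc, htc, rfl, hm⟩ ⟨tc', htc', rfl, hm'⟩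
      (hn ▸ hn')
    have := S.uniqueProp T0 tc htc tc' htc' hp
    subst this
    rw [ht] at ht'
    exact Option.some.inj ht'
  have h1t : ∀ s p o, Fact.triple s p o ∉ J1set S b := by
    rintro s p o ⟨T0, tc, htc, hm, hF⟩
    cases ht : tc.target <;> rw [ht] at hF <;> simp [factOf] at hF
  have hGs : ∀ T n, Fact.shape T n ∈ J ∪ J1set S b ∪ J2set S b ∪ J3set S b J →
      Fact.shape T n ∈ J ∨ Fact.shape T n ∈ J1set S b := by
    rintro T n (((h | h) | ⟨_, _, _, _, _, _, h⟩) | ⟨_, _, _, _, _, _, _, h⟩)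
    · exact Or.inl h
    · exact Or.inr h
    · cases h
    · cases h
  have key : ∀ T, ∀ tc ∈ S.δ T, ∀ x y,
      Fact.shape T x ∈ J ∪ J1set S b ∪ J2set S b ∪ J3set S b J →
      Fact.triple x tc.prop y ∈ J ∪ J1set S b ∪ J2set S b ∪ J3set S b J →
      (Fact.shape T x ∈ J ∧ Fact.triple x tc.prop y ∈ J) ∨
      ((tc.mult = Mult.one ∨ tc.mult = Mult.plus) ∧ y = b T tc.prop ∧
        ¬ ∃ y', Fact.triple x tc.prop y' ∈ J) := by
    intro T tc htc x y hx hy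
    have hx := hGs T x hx
    rcases hy with ((h | h) | ⟨T1, n, hn, tc2, htc2, hm, h⟩) | ⟨T1, n, hn, tc2, htc2, hm, hno, h⟩
    · rcases hx with hx | hx
      · exact Or.inl ⟨hx, h⟩
      · exact (hd x (hJtriple _ _ _ h).1 (h1b T x hx)).elim
    · exact (h1t _ _ _ h).elim
    · simp only [Fact.triple.injEq] at h
      obtain ⟨rfl, hp, hy⟩ := h
      rcases hx with hx | hx
      · exact (hd x (hJshape T x hx) (h1b T1 x hn)).elim
      · have := h1u T T1 x hx hn
        subst this
        have := S.uniqueProp T tc htc tc2 htc2 hp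
        subst this
        exact Or.inr ⟨hm, hy, fun ⟨y', h'⟩ => hd x (hJtriple _ _ _ h').1 (h1b T x hx)⟩
    · simp only [Fact.triple.injEq] at h
      obtain ⟨rfl, hp, hy⟩ := h
      rcases hx with hx | hx
      · have := huniq T T1 x hx hn
        subst this
        have := S.uniqueProp T tc htc tc2 htc2 hp
        subst this
        exact Or.inr ⟨hm, hy, hno⟩
      · exact (hd x (hJshape T1 x hn) (h1b T x hx)).elim
  refine ⟨?_, ?_, ?_⟩
  · intro T n h
    rcases hGs T n h with h | h
    · exact Or.inl (hJshape T n h)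
    · exact Or.inr (h1b T n h)
  · rintro n (((h | h) | ⟨_, _, _, _, _, _, h⟩) | ⟨_, _, _, _, _, _, _, h⟩)
    · exact hJlit n h
    · exact h1l n h
    · cases h
    · cases h
  · intro T tc htc
    refine ⟨?_, ?_, ?_⟩
    · intro x y hx hy
      rcases key T tc htc x y hx hy with ⟨hx', hy'⟩ | ⟨hm, rfl, -⟩
      · exact Or.inl (Or.inl (Or.inl (hJtc T tc htc x y hx' hy')))
      · exact Or.inl (Or.inl (Or.inr ⟨T, tc, htc, hm, rfl⟩))
    · intro hm x hx
      rcases hGs T x hx with h | h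
      · by_cases hy : ∃ y, Fact.triple x tc.prop y ∈ J
        · obtain ⟨y, hy⟩ := hy
          exact ⟨y, Or.inl (Or.inl (Or.inl hy))⟩
        · exact ⟨b T tc.prop, Or.inr ⟨T, x, h, tc, htc, hm, hy, rfl⟩⟩
      · exact ⟨b T tc.prop, Or.inl (Or.inr ⟨T, x, h, tc, htc, hm, rfl⟩)⟩
    · intro hm x y z hx hy hz
      rcases key T tc htc x y hx hy with ⟨hx', hy'⟩ | ⟨-, hy', hno⟩ <;>
      rcases key T tc htc x z hx hz with ⟨hx'', hz'⟩ | ⟨-, hz', hno'⟩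
      · exact hJmult T tc htc hm x y z hx' hy' hz'
      · exact (hno' ⟨y, hy'⟩).elim
      · exact (hno ⟨z, hz'⟩).elim
      · rw [hy', hz']

end RdfDE
end

section
/- Let DES = (R, S, Σ_st, F, F_int) be a fully-typed data exchange setting such that for every contentious pair of stds σ_1, σ_2 in Σ_st, the object terms o_1 and o_2 are either both variables or both functional terms over the same function symbol g. For each such contentious pair, let z (resp. z') be the vector of variables of o_1 (resp. o_2), of common length n, and let m = |x_1| = |x_2|; define the (m+n)-ary queries V_{σ_1}(x, z) = ∃(y_1 \ z). φ_1(x, y_1) and V_{σ_2}(x, z') = ∃(y_2 \ z'). φ_2(x, y_2), the query V_{σ_1,σ_2} = V_{σ_1} ∪ V_{σ_2}, and the functional dependency fd_{σ_1,σ_2} : {1,…,m} → {m+1,…,m+n} on V_{σ_1,σ_2}. Then DES is key-covered if and only if for every valid instance I of R and every contentious pair σ_1, σ_2 of Σ_st, the relation V_{σ_1,σ_2}(I) (the set of tuples (a, b) ∈ Dom^{m+n} such that V_{σ_1}(a, b) or V_{σ_2}(a, b) holds in I) satisfies fd_{σ_1,σ_2}. -/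
namespace RdfDE

variable {Dom RSym FSym Shape : Type} {ar : RSym → ℕ} {far : FSym → ℕ}

variable {Dom RSym FSym Shape : Type} {ar : RSym → ℕ} {far : FSym → ℕ}

theorem heq_iff_ofFn {α : Type} {n m : ℕ} (h : n = m) (a : Fin n → α) (b : Fin m → α) :
    HEq a b ↔ List.ofFn a = List.ofFn b := by
  subst h
  rw [heq_iff_eq, List.ofFn_inj]

theorem eval_iff_list (des : DES Dom RSym FSym Shape ar far)
    (σ1 σ2 : Std Dom RSym FSym ar far) (h : objMatch σ1 σ2)
    (ν1 : σ1.Var → Dom) (ν2 : σ2.Var → Dom) :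
    Obj.eval des.Fint ν1 σ1.obj = Obj.eval des.Fint ν2 σ2.obj ↔
      List.ofFn (fun j => ν1 (σ1.objVars.2 j)) = List.ofFn (fun j => ν2 (σ2.objVars.2 j)) := by
  obtain ⟨f1, n1, b1, bf1, c1, p1, o1⟩ := σ1
  obtain ⟨f2, n2, b2, bf2, c2, p2, o2⟩ := σ2
  rcases o1 with v1 | ⟨g1, z1⟩ <;> rcases o2 with v2 | ⟨g2, z2⟩
  · simp [Obj.eval, Std.objVars]
  · simp [objMatch] at h
  · simp [objMatch] at h
  · have hg : g1 = g2 := by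
      rcases h with ⟨v1, v2, h1, h2⟩ | ⟨g, z1, z2, h1, h2⟩
      · cases h1
      · injection h1 with h1
        injection h2 with h2
        rw [h1, h2]
    subst hg
    simp only [Obj.eval, Std.objVars]
    rw [List.ofFn_inj]
    exact (des.FintInj g1).eq_iff

theorem contentious_symm (des : DES Dom RSym FSym Shape ar far)
    {σ1 σ2 : Std Dom RSym FSym ar far} (h : contentious des σ1 σ2) :
    contentious des σ2 σ1 := by
  obtain ⟨h1, h2, hf, hp, tc, htc, hprop, -, hm⟩ := h
  rw [hf] at htc
  exact ⟨h2, h1, hf.symm, hp.symm, tc, htc, hprop.trans hp,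
    des.stConf _ h2 tc htc (hprop.trans hp), hm⟩

theorem contentious_left (des : DES Dom RSym FSym Shape ar far)
    {σ1 σ2 : Std Dom RSym FSym ar far} (h : contentious des σ1 σ2) :
    contentious des σ1 σ1 := by
  obtain ⟨h1, h2, hf, hp, h⟩ := h
  exact ⟨h1, h1, rfl, rfl, h⟩

theorem stmt8 [Countable Dom] [Finite RSym] [Finite FSym] [Finite Shape]
    (des : DES Dom RSym FSym Shape ar far)
    (hmatch : ∀ σ1 σ2, contentious des σ1 σ2 → objMatch σ1 σ2) :
    keyCovered des ↔
      ∀ I : Set (RelFact Dom RSym ar), validInst des.D des.fds I →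
        ∀ σ1 σ2, contentious des σ1 σ2 →
          ∀ ab ∈ viewRel σ1 I ∪ viewRel σ2 I, ∀ ab' ∈ viewRel σ1 I ∪ viewRel σ2 I,
            ab.1 = ab'.1 → ab.2 = ab'.2 := by
  constructor
  · intro hk I hI σ1 σ2 hc
    have key : ∀ τ1 τ2, contentious des τ1 τ2 → ∀ ab ∈ viewRel τ1 I, ∀ ab' ∈ viewRel τ2 I,
        ab.1 = ab'.1 → ab.2 = ab'.2 := by
      rintro τ1 τ2 ht ab ⟨ν1, hb1, hx1, hz1⟩ ab' ⟨ν2, hb2, hx2, hz2⟩ he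
      rw [hz1, hz2]
      rw [hx1, hx2] at he
      exact (eval_iff_list des τ1 τ2 (hmatch _ _ ht) ν1 ν2).1
        (hk τ1 τ2 ht I hI ν1 ν2 hb1 hb2
          ((heq_iff_ofFn (congrArg far ht.2.2.1) _ _).2 he))
    have hs := contentious_symm des hc
    rintro ab (h | h) ab' (h' | h')
    · exact key _ _ (contentious_left des hc) _ h _ h'
    · exact key _ _ hc _ h _ h'
    · exact key _ _ hs _ h _ h'
    · exact key _ _ (contentious_left des hs) _ h _ h'
  · intro h σ1 σ2 hc I hI ν1 ν2 hb1 hb2 he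
    exact (eval_iff_list des σ1 σ2 (hmatch _ _ hc) ν1 ν2).2
      (h I hI σ1 σ2 hc (_, _) (Or.inl ⟨ν1, hb1, rfl, rfl⟩) (_, _) (Or.inr ⟨ν2, hb2, rfl, rfl⟩)
        ((heq_iff_ofFn (congrArg far hc.2.2.1) _ _).1 he))

end RdfDE
end
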